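/- arXiv:2009.02730 — 6 statements merged into one kernel-verified Lean document; each statement's English description precedes it below -/
import Mathlib

section
/- Define F : ℝ² → ℝ by F(η,δ) = (1 + η·(2π − δ))·(η − sin δ) − η·cos δ. Then F(0,0) = 0, the partial derivative ∂F/∂δ(0,0) = −1 ≠ 0, and there exist ε > 0 and a twice continuously differentiable function δ : (−ε,ε) → ℝ with δ(0) = 0 and F(η, δ(η)) = 0 for all |η| < ε, which moreover satisfies δ'(0) = 0 and δ''(0) = 4π; consequently δ(η) = 2π·η² + o(η²) as η → 0. -/
open Real Filter Asymptotics

/-!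
Since `F(0, δ) = -sin δ`, the implicit function theorem gives a `C²` solution `g` near `0`. Strict
differentiability of `F` in the second variable turns `F(η, g(η)) = 0` into
`F(η, 0) - g(η) = o(g(η))`, and `F(η, 0) = 2πη²`, so `g(η) = 2πη² + o(η²)`. A `C²` function has only
one second-order expansion at a point, so this also determines `g'(0)` and `g''(0)`.
-/

open scoped Topology Nat ContDiff

section ImplicitFunction

variable {𝕜 E : Type*} [NontriviallyNormedField 𝕜] [NormedAddCommGroup E] [NormedSpace 𝕜 E]

lemma comp_inr_eq_toSpanSingleton_of_hasDerivAt {G : Type*} [NormedAddCommGroup G]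
    [NormedSpace 𝕜 G] {f : E × 𝕜 → G} {a : E} {b : 𝕜} {c : G} {f' : E × 𝕜 →L[𝕜] G}
    (hf : HasFDerivAt f f' (a, b)) (hc : HasDerivAt (fun y ↦ f (a, y)) c b) :
    f' ∘L .inr 𝕜 E 𝕜 = .toSpanSingleton 𝕜 c :=
  (hf.comp b (hasFDerivAt_prodMk_right a b)).unique hc.hasFDerivAt

lemma isEquivalent_sub_of_eventually_apply_eq {f : E × 𝕜 → 𝕜} {f' : E × 𝕜 →L[𝕜] 𝕜}
    {g : E → 𝕜} {a : E} {c : 𝕜}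
    (hf : HasStrictFDerivAt f f' (a, g a)) (hc : HasDerivAt (fun y ↦ f (a, y)) c (g a))
    (hc₀ : c ≠ 0) (hg : ContinuousAt g a) (hfg : ∀ᶠ x in 𝓝 a, f (x, g x) = f (a, g a)) :
    (fun x ↦ g x - g a) ~[𝓝 a] fun x ↦ -c⁻¹ * (f (x, g a) - f (a, g a)) := by
  have hf'_apply (y : 𝕜) : f' (0, y) = y * c := by
    simpa using DFunLike.congr_fun
      (comp_inr_eq_toSpanSingleton_of_hasDerivAt hf.hasFDerivAt hc) y
  have tendsto_pair : Tendsto (fun x ↦ ((x, g a), (x, g x))) (𝓝 a) (𝓝 ((a, g a), (a, g a))) := by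
    have continuousAt_pair : ContinuousAt (fun x ↦ ((x, g a), (x, g x))) a := by fun_prop
    exact continuousAt_pair
  have isBigO_sub : (fun x ↦ ((x, g a) - (x, g x) : E × 𝕜)) =O[𝓝 a] fun x ↦ g x - g a :=
    .of_bound' <| .of_forall fun x ↦ by simp [norm_sub_rev]
  have remainder := (hf.isLittleO.comp_tendsto tendsto_pair).trans_isBigO isBigO_sub
  refine IsEquivalent.symm <| (remainder.const_mul_left (-c⁻¹)).congr' ?_ .rfl
  filter_upwards [hfg] with x hx
  have hsub : ((x, g a) - (x, g x) : E × 𝕜) = (0, g a - g x) := by simp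
  simp only [Function.comp_apply, Pi.sub_apply, hsub, hf'_apply, hx]
  field_simp
  ring

end ImplicitFunction

lemma exists_contDiffAt_eventually_apply_eq {𝕜 E : Type*} [RCLike 𝕜] [NormedAddCommGroup E]
    [NormedSpace 𝕜 E] [CompleteSpace E] {f : E × 𝕜 → 𝕜} {a : E} {b c : 𝕜} {n : ℕ∞ω}
    (hf : ContDiffAt 𝕜 n f (a, b)) (hn : n ≠ 0) (hc : HasDerivAt (fun y ↦ f (a, y)) c b)
    (hc₀ : c ≠ 0) :
    ∃ g : E → 𝕜, g a = b ∧ ContDiffAt 𝕜 n g a ∧ ∀ᶠ x in 𝓝 a, f (x, g x) = f (a, b) := by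
  have invertible : (fderiv 𝕜 f (a, b) ∘L .inr 𝕜 E 𝕜).IsInvertible := by
    rw [comp_inr_eq_toSpanSingleton_of_hasDerivAt (hf.differentiableAt hn).hasFDerivAt hc]
    exact ⟨.unitsEquivAut 𝕜 (Units.mk0 c hc₀), by ext; simp⟩
  exact ⟨hf.implicitFunction hn invertible, hf.implicitFunction_apply_self hn invertible,
    hf.contDiffAt_implicitFunction hn invertible,
    hf.eventually_apply_implicitFunction hn invertible⟩

lemma eq_zero_of_pow_smul_isLittleO_pow {𝕜 E : Type*} [NontriviallyNormedField 𝕜]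
    [NormedAddCommGroup E] [NormedSpace 𝕜 E] {a : 𝕜} {n : ℕ} {v : E}
    (hv : (fun x ↦ (x - a) ^ n • v) =o[𝓝 a] fun x ↦ (x - a) ^ n) : v = 0 := by
  by_contra hv₀
  have frequently_ne_zero : ∃ᶠ x in 𝓝 a, (x - a) ^ n ≠ 0 := by
    have : ∃ᶠ x in 𝓝[≠] a, (x - a) ^ n ≠ 0 := Eventually.frequently <| by
      filter_upwards [self_mem_nhdsWithin] with x hx using pow_ne_zero n (sub_ne_zero.2 hx)
    exact this.filter_mono nhdsWithin_le_nhds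
  have isBigO : (fun x ↦ (x - a) ^ n) =O[𝓝 a] fun x ↦ (x - a) ^ n • v :=
    .of_bound ‖v‖⁻¹ <| .of_forall fun x ↦ by
      rw [norm_smul, mul_comm, mul_assoc, mul_inv_cancel₀ (norm_ne_zero_iff.2 hv₀), mul_one]
  exact isBigO.not_isLittleO frequently_ne_zero hv

section Taylor

variable {E : Type*} [NormedAddCommGroup E] [NormedSpace ℝ E] {f g : ℝ → E} {a : ℝ} {n : ℕ}

lemma isLittleO_sub_sum_iteratedDeriv (hf : ContDiffAt ℝ n f a) :
    (fun x ↦ f x - ∑ k ∈ Finset.range (n + 1), ((k ! : ℝ)⁻¹ * (x - a) ^ k) • iteratedDeriv k f a)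
      =o[𝓝 a] fun x ↦ (x - a) ^ n := by
  obtain ⟨ε, hε, hball⟩ := Metric.eventually_nhds_iff_ball.1 (hf.eventually (by simp))
  have ha : a ∈ Metric.ball a ε := Metric.mem_ball_self hε
  have taylor := taylor_isLittleO (convex_ball a ε) ha
    fun x hx ↦ (hball x hx).contDiffWithinAt
  rw [Metric.isOpen_ball.nhdsWithin_eq ha] at taylor
  simpa only [taylor_within_apply, iteratedDerivWithin_of_isOpen Metric.isOpen_ball ha] using taylor

lemma iteratedDeriv_eq_zero_of_isLittleO_pow (hf : ContDiffAt ℝ n f a)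
    (hfo : f =o[𝓝 a] fun x ↦ (x - a) ^ n) {k : ℕ} (hk : k ≤ n) : iteratedDeriv k f a = 0 := by
  induction k using Nat.strong_induction_on with
  | h k ih =>
    have pow_isBigO : (fun x ↦ (x - a) ^ n) =O[𝓝 a] fun x ↦ (x - a) ^ k := by
      rcases hk.eq_or_lt with rfl | hlt
      · exact isBigO_refl _ _
      · exact ((isLittleO_pow_pow hlt).comp_tendsto (tendsto_sub_nhds_zero_iff.2 tendsto_id)).isBigO
    have taylor := isLittleO_sub_sum_iteratedDeriv (hf.of_le (mod_cast hk) : ContDiffAt ℝ k f a)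
    have leading_term : (fun x ↦ (x - a) ^ k • (k ! : ℝ)⁻¹ • iteratedDeriv k f a)
        =o[𝓝 a] fun x ↦ (x - a) ^ k := by
      refine ((hfo.trans_isBigO pow_isBigO).sub taylor).congr_left fun x ↦ ?_
      rw [sub_sub_cancel, Finset.sum_range_succ, Finset.sum_eq_zero, zero_add, smul_smul, mul_comm]
      intro j hj
      have hjk := Finset.mem_range.1 hj
      rw [ih j hjk (hjk.le.trans hk), smul_zero]
    simpa [Nat.factorial_ne_zero] using eq_zero_of_pow_smul_isLittleO_pow leading_term

lemma iteratedDeriv_eq_of_sub_isLittleO_pow (hf : ContDiffAt ℝ n f a) (hg : ContDiffAt ℝ n g a)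
    (hfg : (fun x ↦ f x - g x) =o[𝓝 a] fun x ↦ (x - a) ^ n) {k : ℕ} (hk : k ≤ n) :
    iteratedDeriv k f a = iteratedDeriv k g a := by
  have hkn : (k : ℕ∞ω) ≤ n := mod_cast hk
  rw [← sub_eq_zero, ← iteratedDeriv_sub (hf.of_le hkn) (hg.of_le hkn)]
  exact iteratedDeriv_eq_zero_of_isLittleO_pow (hf.sub hg) hfg hk

lemma deriv_eq_zero_and_deriv_deriv_eq_of_isLittleO_sq {v : E} (hf : ContDiffAt ℝ 2 f a)
    (hfo : (fun x ↦ f x - (x - a) ^ 2 • v) =o[𝓝 a] fun x ↦ (x - a) ^ 2) :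
    deriv f a = 0 ∧ deriv (deriv f) a = (2 : ℝ) • v := by
  have hquad : ContDiffAt ℝ 2 (fun x ↦ (x - a) ^ 2 • v) a := by fun_prop
  have deriv_quad : deriv (fun x ↦ (x - a) ^ 2 • v) = fun x ↦ (2 * (x - a)) • v := by
    ext x
    simpa using ((((hasDerivAt_id x).sub_const a).pow 2).smul_const v).deriv
  have deriv_deriv_quad : deriv (fun x ↦ (2 * (x - a)) • v) a = (2 : ℝ) • v := by
    simpa using ((((hasDerivAt_id a).sub_const a).const_mul 2).smul_const v).deriv
  have h₁ := iteratedDeriv_eq_of_sub_isLittleO_pow hf hquad hfo one_le_two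
  have h₂ := iteratedDeriv_eq_of_sub_isLittleO_pow hf hquad hfo le_rfl
  simp only [iteratedDeriv_one, deriv_quad, sub_self, mul_zero, zero_smul] at h₁
  simp only [iteratedDeriv_succ, iteratedDeriv_zero, deriv_quad, deriv_deriv_quad] at h₂
  exact ⟨h₁, h₂⟩

end Taylor

/-- The function `F` whose zero set relates `η = 1/θ₋` to `δ = θ₋ - (θ - 2π)`, where the inward
normal to the Archimedean spiral at `θ` meets the previous coil at `θ₋`. It is uncurried so that
the implicit function theorem applies to it directly. -/
noncomputable def previousCoil (p : ℝ × ℝ) : ℝ :=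
  (1 + p.1 * (2 * π - p.2)) * (p.1 - sin p.2) - p.1 * cos p.2

namespace previousCoil

lemma apply_zero_left (δ : ℝ) : previousCoil (0, δ) = -sin δ := by
  simp [previousCoil]

lemma apply_zero_right (η : ℝ) : previousCoil (η, 0) = 2 * π * η ^ 2 := by
  simp only [previousCoil, sin_zero, cos_zero]
  ring

lemma contDiff {n : ℕ∞ω} : ContDiff ℝ n previousCoil := by
  unfold previousCoil
  fun_prop

lemma hasDerivAt_zero_left : HasDerivAt (fun δ ↦ previousCoil (0, δ)) (-1) 0 := by
  simpa [apply_zero_left] using (hasDerivAt_sin 0).fun_neg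

lemma isLittleO_of_eventually_eq_zero {g : ℝ → ℝ} (hg : ContinuousAt g 0) (hg₀ : g 0 = 0)
    (hzero : ∀ᶠ η in 𝓝 0, previousCoil (η, g η) = 0) :
    (fun η ↦ g η - 2 * π * η ^ 2) =o[𝓝 0] fun η ↦ η ^ 2 := by
  have hequiv : g ~[𝓝 0] fun η ↦ 2 * π * η ^ 2 := by
    have hstrict := (contDiff (n := 1)).contDiffAt.hasStrictFDerivAt (x := (0, g 0)) one_ne_zero
    have hderiv : HasDerivAt (fun δ ↦ previousCoil (0, δ)) (-1) (g 0) := by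
      rw [hg₀]
      exact hasDerivAt_zero_left
    simpa [hg₀, apply_zero_right, inv_neg] using
      isEquivalent_sub_of_eventually_apply_eq hstrict hderiv (by norm_num) hg
        (by simpa [hg₀, apply_zero_right] using hzero)
  exact hequiv.isLittleO.trans_isBigO (isBigO_const_mul_self _ _ _)

end previousCoil

/-- For `F(η,δ) = (1 + η(2π − δ))(η − sin δ) − η cos δ` one has `F(0,0) = 0`,
`∂F/∂δ(0,0) = −1 ≠ 0`, and there exist `ε > 0` and a `C²` function
`δ : (−ε,ε) → ℝ` with `δ(0) = 0`, `F(η, δ(η)) = 0` for `|η| < ε`, `δ'(0) = 0`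
and `δ''(0) = 4π`; consequently `δ(η) = 2πη² + o(η²)` as `η → 0`. -/
theorem implicit_function_previous_coil (F : ℝ × ℝ → ℝ)
    (hF : ∀ η δ : ℝ, F (η, δ) = (1 + η * (2 * π - δ)) * (η - Real.sin δ)
      - η * Real.cos δ) :
    F (0, 0) = 0 ∧
    deriv (fun δ : ℝ => F (0, δ)) 0 = -1 ∧ deriv (fun δ : ℝ => F (0, δ)) 0 ≠ 0 ∧
    ∃ ε : ℝ, 0 < ε ∧ ∃ g : ℝ → ℝ,
      ContDiffOn ℝ 2 g (Set.Ioo (-ε) ε) ∧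
      g 0 = 0 ∧
      (∀ η : ℝ, |η| < ε → F (η, g η) = 0) ∧
      deriv g 0 = 0 ∧
      deriv (deriv g) 0 = 4 * π ∧
      (fun η : ℝ => g η - 2 * π * η ^ 2) =o[nhds 0] fun η : ℝ => η ^ 2 := by
  obtain rfl : F = previousCoil := funext fun p ↦ hF p.1 p.2
  have hzero : previousCoil (0, 0) = 0 := by simp [previousCoil.apply_zero_left]
  have hderiv := previousCoil.hasDerivAt_zero_left
  obtain ⟨g, hg₀, hg, hsol⟩ := exists_contDiffAt_eventually_apply_eq
    previousCoil.contDiff.contDiffAt two_ne_zero hderiv (by norm_num)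
  rw [hzero] at hsol
  have hgo := previousCoil.isLittleO_of_eventually_eq_zero hg.continuousAt hg₀ hsol
  obtain ⟨hg₁, hg₂⟩ := deriv_eq_zero_and_deriv_deriv_eq_of_isLittleO_sq (v := 2 * π) hg
    (by simpa [mul_comm] using hgo)
  obtain ⟨ε, hε, hball⟩ := Metric.eventually_nhds_iff_ball.1 (hsol.and (hg.eventually (by simp)))
  rw [Real.ball_zero_eq_Ioo] at hball
  exact ⟨hzero, hderiv.deriv, by rw [hderiv.deriv]; norm_num, ε, hε, g,
    fun η hη ↦ (hball η hη).2.contDiffWithinAt, hg₀, fun η hη ↦ (hball η (abs_lt.1 hη)).1,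
    hg₁, by rw [hg₂, smul_eq_mul]; ring, hgo⟩
end

section
/- Let a > 0 and let g : (θ₀, ∞) → ℝ be a function satisfying g(θ) = θ − 2π + 2π·θ^{-2} + O(θ^{-3}) as θ → ∞. Then for all sufficiently large θ the quantity a²θ⁴/(1+θ²) − a²·(θ² − g(θ)²) is positive, and the function d(θ) := aθ²/√(1+θ²) − √( a²θ⁴/(1+θ²) − a²·(θ² − g(θ)²) ) satisfies d(θ) = (2πaθ/√(1+θ²))·(1 + O(θ^{-1})) as θ → ∞; in particular d(θ) = 2πa + O(θ^{-1}). -/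
open Real Filter Asymptotics

/-!
Write `g(θ) = θ - c + O(θ⁻¹)` with `c = 2π`, and `s = √(1 + θ²)`. The radicand equals
`a² (g(θ)² - θ² / s²)`, so
`d(θ) / a - c = (θ² / s - θ) - (√(g(θ)² - θ² / s²) - g(θ)) - (g(θ) - (θ - c))`.
All three differences are `O(θ⁻¹)`: the first two because a bounded perturbation of `x²` moves
`√(x²) = x` by `O(x⁻¹)`, the third by the expansion of `g`.
-/

lemma abs_sqrt_sq_add_sub_le {x : ℝ} (hx : 0 < x) (y : ℝ) : |√(x ^ 2 + y) - x| ≤ |y / x| := by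
  rw [abs_div, abs_of_pos hx, le_div_iff₀ hx]
  rcases le_total 0 (x ^ 2 + y) with hnonneg | hnonpos
  · have conjugate : (√(x ^ 2 + y) - x) * (√(x ^ 2 + y) + x) = y := by
      linear_combination sq_sqrt hnonneg
    calc |√(x ^ 2 + y) - x| * x
        ≤ |√(x ^ 2 + y) - x| * (√(x ^ 2 + y) + x) := by
          gcongr
          exact le_add_of_nonneg_left (sqrt_nonneg _)
      _ = |(√(x ^ 2 + y) - x) * (√(x ^ 2 + y) + x)| := by
          rw [abs_mul, abs_of_nonneg (a := √(x ^ 2 + y) + x) (by positivity)]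
      _ = |y| := by rw [conjugate]
  · rw [sqrt_eq_zero_of_nonpos hnonpos, zero_sub, abs_neg, abs_of_pos hx]
    linarith [neg_le_abs y]

lemma isBigO_sqrt_sq_add_sub {α : Type*} {l : Filter α} {f h : α → ℝ} (hf : ∀ᶠ x in l, 0 < f x) :
    (fun x => √(f x ^ 2 + h x) - f x) =O[l] fun x => h x / f x :=
  .of_bound' (hf.mono fun x hx => abs_sqrt_sq_add_sub_le hx (h x))

lemma isBigO_sqrt_one_add_sq_sub_self :
    (fun θ : ℝ => √(1 + θ ^ 2) - θ) =O[atTop] fun θ => 1 / θ := by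
  simpa only [add_comm] using
    isBigO_sqrt_sq_add_sub (f := fun θ : ℝ => θ) (h := fun _ => 1) (eventually_gt_atTop 0)

lemma isBigO_one_div_one_atTop : (fun θ : ℝ => 1 / θ) =O[atTop] fun _ => (1 : ℝ) := by
  simpa only [one_div] using tendsto_inv_atTop_zero.isBigO_one ℝ

lemma isBigO_sq_div_sqrt_one_add_sq_sub_self :
    (fun θ : ℝ => θ ^ 2 / √(1 + θ ^ 2) - θ) =O[atTop] fun θ => 1 / θ := by
  have ratio_bounded : (fun θ : ℝ => θ / √(1 + θ ^ 2)) =O[atTop] fun _ => (1 : ℝ) := by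
    refine .of_norm_le fun θ => ?_
    rw [norm_div, norm_of_nonneg (sqrt_nonneg _), norm_eq_abs]
    exact div_le_one_of_le₀ (abs_le_sqrt (by linarith)) (sqrt_nonneg _)
  refine (ratio_bounded.mul isBigO_sqrt_one_add_sq_sub_self).neg_left.congr (fun θ => ?_)
    fun θ => one_mul _
  have : √(1 + θ ^ 2) ≠ 0 := by positivity
  field_simp
  ring

lemma isBigO_sqrt_one_add_sq_div_self_sub_one :
    (fun θ : ℝ => √(1 + θ ^ 2) / θ - 1) =O[atTop] fun θ => 1 / θ := by
  refine ((isBigO_sqrt_one_add_sq_sub_self.trans isBigO_one_div_one_atTop).mul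
    (isBigO_refl (fun θ : ℝ => 1 / θ) atTop)).congr' ?_ (.of_eq (funext fun θ => one_mul _))
  filter_upwards [eventually_ne_atTop 0] with θ hθ
  field_simp

lemma sq_div_one_add_sq_lt_one (θ : ℝ) : θ ^ 2 / (1 + θ ^ 2) < 1 :=
  (div_lt_one (by positivity)).2 (by linarith)

/-- A quarter of the discriminant of `u² - (2aθ² / √(1 + θ²)) u + a² (θ² - φ²)`, the quadratic
satisfied by the length `u` of the normal segment of the spiral `r = aθ` between the polar angles
`θ` and `φ`. -/
noncomputable def archimedeanRadicand (a θ φ : ℝ) : ℝ :=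
  a ^ 2 * θ ^ 4 / (1 + θ ^ 2) - a ^ 2 * (θ ^ 2 - φ ^ 2)

/-- The length of the normal segment of the spiral `r = aθ` between the polar angles `θ` and `φ`,
as the smaller root of its quadratic equation. -/
noncomputable def archimedeanWidth (a θ φ : ℝ) : ℝ :=
  a * θ ^ 2 / √(1 + θ ^ 2) - √(archimedeanRadicand a θ φ)

lemma archimedeanRadicand_eq (a θ φ : ℝ) :
    archimedeanRadicand a θ φ = a ^ 2 * (φ ^ 2 - θ ^ 2 / (1 + θ ^ 2)) := by
  rw [archimedeanRadicand]
  field_simp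
  ring

lemma archimedeanRadicand_pos {a φ : ℝ} (ha : a ≠ 0) (hφ : 1 ≤ |φ|) (θ : ℝ) :
    0 < archimedeanRadicand a θ φ := by
  rw [archimedeanRadicand_eq]
  have : 1 ≤ φ ^ 2 := (one_le_sq_iff_one_le_abs φ).2 hφ
  exact mul_pos (by positivity) (by linarith [sq_div_one_add_sq_lt_one θ])

lemma archimedeanWidth_eq {a : ℝ} (ha : 0 ≤ a) (θ φ : ℝ) :
    archimedeanWidth a θ φ =
      a * (θ ^ 2 / √(1 + θ ^ 2) - √(φ ^ 2 + -(θ ^ 2 / (1 + θ ^ 2)))) := by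
  rw [archimedeanWidth, archimedeanRadicand_eq, sqrt_mul (sq_nonneg a), sqrt_sq ha]
  ring_nf

lemma isEquivalent_id_of_isBigO_sub {c : ℝ} {g : ℝ → ℝ}
    (hg : (fun θ => g θ - (θ - c)) =O[atTop] fun _ => (1 : ℝ)) : g ~[atTop] id := by
  have sub_bounded : (fun θ => g θ - θ) =O[atTop] fun _ => (1 : ℝ) :=
    (hg.sub (isBigO_const_const c one_ne_zero atTop)).congr_left fun θ => by ring
  exact sub_bounded.trans_isLittleO (isLittleO_const_id_atTop 1)

lemma isBigO_sqrt_sq_sub_sq_div_sub {g : ℝ → ℝ} (hg : g ~[atTop] id) :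
    (fun θ => √(g θ ^ 2 + -(θ ^ 2 / (1 + θ ^ 2))) - g θ) =O[atTop] fun θ => 1 / θ := by
  have perturbation_bounded :
      (fun θ : ℝ => -(θ ^ 2 / (1 + θ ^ 2))) =O[atTop] fun _ => (1 : ℝ) := by
    refine .of_norm_le fun θ => ?_
    rw [norm_neg, norm_of_nonneg (by positivity)]
    exact (sq_div_one_add_sq_lt_one θ).le
  have inv_isBigO : (fun θ => (g θ)⁻¹) =O[atTop] fun θ => θ⁻¹ := hg.inv.isBigO
  have eventually_pos : ∀ᶠ θ in atTop, 0 < g θ :=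
    (hg.symm.tendsto_atTop tendsto_id).eventually_gt_atTop 0
  simpa only [div_eq_mul_inv] using
    (isBigO_sqrt_sq_add_sub eventually_pos).trans (perturbation_bounded.mul inv_isBigO)

lemma eventually_archimedeanRadicand_pos {a : ℝ} (ha : a ≠ 0) {g : ℝ → ℝ}
    (hg : Tendsto g atTop atTop) : ∀ᶠ θ in atTop, 0 < archimedeanRadicand a θ (g θ) := by
  filter_upwards [hg.eventually_ge_atTop 1] with θ hθ
  exact archimedeanRadicand_pos ha (hθ.trans (le_abs_self _)) θ

lemma isBigO_archimedeanWidth_sub {a c : ℝ} (ha : 0 ≤ a) {g : ℝ → ℝ}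
    (hg : (fun θ => g θ - (θ - c)) =O[atTop] fun θ => 1 / θ) :
    (fun θ => archimedeanWidth a θ (g θ) - c * a) =O[atTop] fun θ => 1 / θ := by
  have equiv_id := isEquivalent_id_of_isBigO_sub (hg.trans isBigO_one_div_one_atTop)
  refine (((isBigO_sq_div_sqrt_one_add_sq_sub_self.sub
    (isBigO_sqrt_sq_sub_sq_div_sub equiv_id)).sub hg).const_mul_left a).congr_left fun θ => ?_
  rw [archimedeanWidth_eq ha]
  ring

lemma isBigO_div_mul_div_sqrt_sub_one {k : ℝ} (hk : k ≠ 0) {d : ℝ → ℝ}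
    (hd : (fun θ => d θ - k) =O[atTop] fun θ => 1 / θ) :
    (fun θ => d θ / (k * θ / √(1 + θ ^ 2)) - 1) =O[atTop] fun θ => 1 / θ := by
  have d_bounded : d =O[atTop] fun _ => (1 : ℝ) :=
    ((hd.trans isBigO_one_div_one_atTop).add (isBigO_const_const k one_ne_zero atTop)).congr_left
      fun θ => sub_add_cancel _ _
  have from_ratio := (d_bounded.mul isBigO_sqrt_one_add_sq_div_self_sub_one).congr_right
    fun θ => one_mul _
  refine ((from_ratio.add hd).const_mul_left k⁻¹).congr_left fun θ => ?_
  rw [div_div_eq_mul_div, mul_div_mul_comm]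
  field_simp
  ring

lemma isBigO_one_div_pow_one_div {n : ℕ} (hn : n ≠ 0) :
    (fun θ : ℝ => 1 / θ ^ n) =O[atTop] fun θ => 1 / θ := by
  refine .of_norm_eventuallyLE ?_
  filter_upwards [eventually_ge_atTop 1] with θ hθ
  rw [norm_of_nonneg (by positivity)]
  exact one_div_le_one_div_of_le (by positivity) (le_self_pow₀ hθ hn)

lemma isBigO_sub_of_isBigO_sub_add_div_sq {b c : ℝ} {g : ℝ → ℝ}
    (hg : (fun θ => g θ - (θ - c + b / θ ^ 2)) =O[atTop] fun θ => 1 / θ ^ 3) :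
    (fun θ => g θ - (θ - c)) =O[atTop] fun θ => 1 / θ :=
  ((hg.trans (isBigO_one_div_pow_one_div three_ne_zero)).add
    ((isBigO_one_div_pow_one_div two_ne_zero).const_mul_left b)).congr_left fun θ => by ring

theorem archimedean_width_asymptotics_general {a c : ℝ} (ha : 0 < a) (hc : c ≠ 0) {g : ℝ → ℝ}
    (hg : (fun θ => g θ - (θ - c)) =O[atTop] fun θ => 1 / θ) :
    (∀ᶠ θ in atTop, 0 < archimedeanRadicand a θ (g θ)) ∧
    (fun θ => archimedeanWidth a θ (g θ) / (c * a * θ / √(1 + θ ^ 2)) - 1) =O[atTop]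
      (fun θ => 1 / θ) ∧
    (fun θ => archimedeanWidth a θ (g θ) - c * a) =O[atTop] fun θ => 1 / θ := by
  have equiv_id := isEquivalent_id_of_isBigO_sub (hg.trans isBigO_one_div_one_atTop)
  have width_sub := isBigO_archimedeanWidth_sub ha.le hg
  exact ⟨eventually_archimedeanRadicand_pos ha.ne' (equiv_id.symm.tendsto_atTop tendsto_id),
    isBigO_div_mul_div_sqrt_sub_one (mul_ne_zero hc ha.ne') width_sub, width_sub⟩

/-- Let `a > 0` and `g(θ) = θ − 2π + 2πθ⁻² + O(θ⁻³)` as `θ → ∞`. Then eventually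
`a²θ⁴/(1+θ²) − a²(θ² − g(θ)²) > 0`, and
`d(θ) := aθ²/√(1+θ²) − √(a²θ⁴/(1+θ²) − a²(θ² − g(θ)²))` satisfies
`d(θ) = (2πaθ/√(1+θ²))(1 + O(θ⁻¹))`; in particular `d(θ) = 2πa + O(θ⁻¹)`. -/
theorem archimedean_width_asymptotics (a : ℝ) (ha : 0 < a) (g : ℝ → ℝ)
    (hg : (fun θ : ℝ => g θ - (θ - 2 * π + 2 * π / θ ^ 2)) =O[atTop]
      fun θ : ℝ => 1 / θ ^ 3)
    (d : ℝ → ℝ)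
    (hd : ∀ θ : ℝ, d θ = a * θ ^ 2 / Real.sqrt (1 + θ ^ 2)
      - Real.sqrt (a ^ 2 * θ ^ 4 / (1 + θ ^ 2) - a ^ 2 * (θ ^ 2 - (g θ) ^ 2))) :
    (∀ᶠ θ : ℝ in atTop,
      0 < a ^ 2 * θ ^ 4 / (1 + θ ^ 2) - a ^ 2 * (θ ^ 2 - (g θ) ^ 2)) ∧
    (fun θ : ℝ => d θ / (2 * π * a * θ / Real.sqrt (1 + θ ^ 2)) - 1) =O[atTop]
      (fun θ : ℝ => 1 / θ) ∧
    (fun θ : ℝ => d θ - 2 * π * a) =O[atTop] fun θ : ℝ => 1 / θ := by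
  obtain rfl : d = fun θ => archimedeanWidth a θ (g θ) := funext hd
  exact archimedean_width_asymptotics_general ha two_pi_pos.ne'
    (isBigO_sub_of_isBigO_sub_add_div_sq hg)
end

section
/- Let c < d be real numbers and let f : [c,d] → ℝ be continuously differentiable with f(c) = 0. Then ∫_c^d f'(x)² dx ≥ (π/(2(d−c)))² · ∫_c^d f(x)² dx. -/
open Real intervalIntegral

/-!
The weight `w x = k * tan (k * (d - x))` solves the Riccati equation `w' = -k² - w²`, and it is
regular on `[c, d]` as long as `k * (d - c) < π / 2`. Expanding `0 ≤ ‖f' - w • f‖²` gives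
`(w * ‖f‖²)' ≤ ‖f'‖² - k² * ‖f‖²`. Integrating over `[c, d]`, both boundary terms vanish because
`w d = 0` and `f c = 0`. The optimal constant is reached in the limit `k → π / (2 * (d - c))`,
where `w` blows up at `c`.
-/

section

open Set MeasureTheory Filter Topology
open scoped RealInnerProductSpace

lemma hasDerivAt_mul_tan_mul_sub {k d x : ℝ} (hcos : cos (k * (d - x)) ≠ 0) :
    HasDerivAt (fun y ↦ k * tan (k * (d - y))) (-k ^ 2 - (k * tan (k * (d - x))) ^ 2) x := by
  have h_arg : HasDerivAt (fun y ↦ k * (d - y)) (k * -1) x :=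
    ((hasDerivAt_id x).const_sub d).const_mul k
  refine (((hasDerivAt_tan hcos).comp x h_arg).const_mul k).congr_deriv ?_
  rw [one_div, ← inv_one_add_tan_sq hcos, inv_inv]
  ring

variable {E : Type*} [NormedAddCommGroup E] [InnerProductSpace ℝ E]

lemma mul_two_mul_inner_le_norm_sq_add (a : ℝ) (u v : E) :
    a * (2 * ⟪u, v⟫) ≤ ‖v‖ ^ 2 + a ^ 2 * ‖u‖ ^ 2 := by
  have h_expand : ‖v - a • u‖ ^ 2 = ‖v‖ ^ 2 - 2 * (a * ⟪u, v⟫) + a ^ 2 * ‖u‖ ^ 2 := by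
    rw [norm_sub_sq_real, real_inner_smul_right, real_inner_comm, norm_smul, mul_pow,
      norm_eq_abs, sq_abs]
  linarith [sq_nonneg ‖v - a • u‖]

variable {c d : ℝ} {f f' : ℝ → E}

theorem integral_mul_norm_sq_le_of_riccati {q w w' : ℝ → ℝ} (hcd : c ≤ d)
    (hf : ContinuousOn f (Icc c d))
    (hff' : ∀ x ∈ Ioo c d, HasDerivWithinAt f (f' x) (Ioi x) x)
    (hf' : IntegrableOn (fun x ↦ ‖f' x‖ ^ 2) (Icc c d))
    (hq : IntegrableOn q (Icc c d))
    (hw : ContinuousOn w (Icc c d))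
    (hww' : ∀ x ∈ Ioo c d, HasDerivWithinAt w (w' x) (Ioi x) x)
    (h_riccati : ∀ x ∈ Ioo c d, w' x + w x ^ 2 + q x ≤ 0) :
    w d * ‖f d‖ ^ 2 + ∫ x in c..d, q x * ‖f x‖ ^ 2 ≤
      w c * ‖f c‖ ^ 2 + ∫ x in c..d, ‖f' x‖ ^ 2 := by
  have hf_sq : ContinuousOn (fun x ↦ ‖f x‖ ^ 2) (Icc c d) := hf.norm.pow 2
  have hqf : IntegrableOn (fun x ↦ q x * ‖f x‖ ^ 2) (Icc c d) :=
    hq.mul_continuousOn hf_sq isCompact_Icc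
  have h_deriv (x : ℝ) (hx : x ∈ Ioo c d) : HasDerivWithinAt (fun y ↦ w y * ‖f y‖ ^ 2)
      (w' x * ‖f x‖ ^ 2 + w x * (2 * ⟪f x, f' x⟫)) (Ioi x) x :=
    (hww' x hx).mul (hff' x hx).norm_sq
  have h_deriv_le (x : ℝ) (hx : x ∈ Ioo c d) :
      w' x * ‖f x‖ ^ 2 + w x * (2 * ⟪f x, f' x⟫) ≤ ‖f' x‖ ^ 2 - q x * ‖f x‖ ^ 2 := by
    have h_square := mul_two_mul_inner_le_norm_sq_add (w x) (f x) (f' x)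
    have h_potential := mul_nonpos_of_nonpos_of_nonneg (h_riccati x hx) (sq_nonneg ‖f x‖)
    linarith
  have h_ftc : w d * ‖f d‖ ^ 2 - w c * ‖f c‖ ^ 2 ≤
      ∫ x in c..d, (‖f' x‖ ^ 2 - q x * ‖f x‖ ^ 2) :=
    sub_le_integral_of_hasDeriv_right_of_le hcd (hw.mul hf_sq) h_deriv (hf'.sub hqf) h_deriv_le
  rw [integral_sub ((intervalIntegrable_iff_integrableOn_Icc_of_le hcd).2 hf')
    ((intervalIntegrable_iff_integrableOn_Icc_of_le hcd).2 hqf)] at h_ftc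
  linarith

theorem sq_mul_integral_norm_sq_le_of_mul_lt_pi_div_two {k : ℝ} (hcd : c ≤ d)
    (hf : ContinuousOn f (Icc c d))
    (hff' : ∀ x ∈ Ioo c d, HasDerivWithinAt f (f' x) (Ioi x) x)
    (hf' : IntegrableOn (fun x ↦ ‖f' x‖ ^ 2) (Icc c d))
    (hfc : f c = 0) (hk₀ : 0 ≤ k) (hk : k * (d - c) < π / 2) :
    k ^ 2 * ∫ x in c..d, ‖f x‖ ^ 2 ≤ ∫ x in c..d, ‖f' x‖ ^ 2 := by
  have hcos (x : ℝ) (hx : x ∈ Icc c d) : cos (k * (d - x)) ≠ 0 := by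
    have h_nonneg : 0 ≤ k * (d - x) := mul_nonneg hk₀ (sub_nonneg.2 hx.2)
    have h_le : k * (d - x) ≤ k * (d - c) := by gcongr; exact hx.1
    exact (cos_pos_of_mem_Ioo ⟨by linarith [pi_pos], by linarith⟩).ne'
  have hw (x : ℝ) (hx : x ∈ Icc c d) := hasDerivAt_mul_tan_mul_sub (hcos x hx)
  have h_weighted := integral_mul_norm_sq_le_of_riccati (q := fun _ ↦ k ^ 2) hcd hf hff' hf'
    continuousOn_const.integrableOn_Icc (HasDerivAt.continuousOn hw)
    (fun x hx ↦ (hw x (Ioo_subset_Icc_self hx)).hasDerivWithinAt) (fun x _ ↦ by linarith)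
  simpa [hfc] using h_weighted

theorem poincare_dirichlet_one_endpoint_general (hcd : c < d)
    (hf : ContinuousOn f (Icc c d))
    (hff' : ∀ x ∈ Ioo c d, HasDerivWithinAt f (f' x) (Ioi x) x)
    (hf' : IntegrableOn (fun x ↦ ‖f' x‖ ^ 2) (Icc c d))
    (hfc : f c = 0) :
    (π / (2 * (d - c))) ^ 2 * ∫ x in c..d, ‖f x‖ ^ 2 ≤ ∫ x in c..d, ‖f' x‖ ^ 2 := by
  have h_length : 0 < d - c := sub_pos.2 hcd
  have h_tendsto : Tendsto (fun k : ℝ ↦ k ^ 2 * ∫ x in c..d, ‖f x‖ ^ 2)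
      (𝓝[<] (π / (2 * (d - c)))) (𝓝 ((π / (2 * (d - c))) ^ 2 * ∫ x in c..d, ‖f x‖ ^ 2)) :=
    Continuous.tendsto' (by fun_prop) _ _ rfl |>.mono_left nhdsWithin_le_nhds
  refine le_of_tendsto h_tendsto ?_
  filter_upwards [Ioo_mem_nhdsLT (show 0 < π / (2 * (d - c)) by positivity)] with k hk
  have hk_lt : k * (d - c) < π / 2 := by
    rw [← lt_div_iff₀ h_length, div_div]
    exact hk.2
  exact sq_mul_integral_norm_sq_le_of_mul_lt_pi_div_two hcd.le hf hff' hf' hfc hk.1.le hk_lt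

end

/-- One-sided Poincaré inequality: if `f` is continuously differentiable on `[c,d]`
with `f(c) = 0`, then `∫_c^d f'(x)² dx ≥ (π/(2(d−c)))² ∫_c^d f(x)² dx`. -/
theorem poincare_dirichlet_one_endpoint (c d : ℝ) (hcd : c < d) (f f' : ℝ → ℝ)
    (hderiv : ∀ x ∈ Set.Icc c d, HasDerivAt f (f' x) x)
    (hf'cont : ContinuousOn f' (Set.Icc c d))
    (hfc : f c = 0) :
    (∫ x in c..d, (f' x) ^ 2) ≥ (π / (2 * (d - c))) ^ 2 * ∫ x in c..d, (f x) ^ 2 := by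
  simpa using poincare_dirichlet_one_endpoint_general hcd (HasDerivAt.continuousOn hderiv)
    (fun x hx ↦ (hderiv x (Set.Ioo_subset_Icc_self hx)).hasDerivWithinAt)
    (hf'cont.norm.pow 2).integrableOn_Icc hfc
end

section
/- Let 0 ≤ α < β and let ψ : [α,β] → ℝ be continuously differentiable with ψ(α) = 0 and ψ(β) = 0. Then ∫_α^β r·ψ'(r)² dr ≥ ∫_α^β ( (π/(β−α))²·r − 1/(4r) )·ψ(r)² dr, where in the case α = 0 the right-hand integrand is integrable because ψ vanishes at 0. -/
open Real MeasureTheory intervalIntegral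

/-!
If `u > 0` satisfies `(p u')' + q u ≤ 0`, then `w = p u' / u` satisfies the Riccati inequality
`w' ≤ -(w² / p + q)`, and completing the square gives `(w f²)' ≤ p f'² - q f²`; integrating
over an interval at whose endpoints `f` vanishes yields `∫ q f² ≤ ∫ p f'²`.

For `p = r` take `u = cos (k (r - m)) / √r`, with `m` the midpoint of `[α, β]`. Then
`w = -k r tan (k (r - m)) - 1 / 2` and `q = k² r - 1 / (4 r)`. For `k < π / (β - α)` the function
`w` is continuous on all of `[α, β]`, even when `α = 0`, so no boundary analysis is needed, and the
critical value `k = π / (β - α)` is reached by a limit.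
-/

theorem integral_mul_sq_le_integral_mul_deriv_sq_of_riccati {a b : ℝ} {p q w w' f f' : ℝ → ℝ}
    (hab : a ≤ b) (hp : ∀ x ∈ Set.Ioo a b, 0 < p x)
    (hw : ContinuousOn w (Set.Icc a b)) (hw' : ∀ x ∈ Set.Ioo a b, HasDerivAt w (w' x) x)
    (hriccati : ∀ x ∈ Set.Ioo a b, w' x ≤ -(w x ^ 2 / p x + q x))
    (hf : ContinuousOn f (Set.Icc a b)) (hf' : ∀ x ∈ Set.Ioo a b, HasDerivAt f (f' x) x)
    (hfa : f a = 0) (hfb : f b = 0)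
    (hpf' : IntervalIntegrable (fun x => p x * f' x ^ 2) volume a b)
    (hqf : IntervalIntegrable (fun x => q x * f x ^ 2) volume a b) :
    ∫ x in a..b, q x * f x ^ 2 ≤ ∫ x in a..b, p x * f' x ^ 2 := by
  have hderiv : ∀ x ∈ Set.Ioo a b,
      HasDerivAt (fun x => w x * f x ^ 2) (w' x * f x ^ 2 + w x * (2 * f x * f' x)) x :=
    fun x hx => (hw' x hx).fun_mul (by simpa using (hf' x hx).fun_pow 2)
  have hderiv_le : ∀ x ∈ Set.Ioo a b,
      w' x * f x ^ 2 + w x * (2 * f x * f' x) ≤ p x * f' x ^ 2 - q x * f x ^ 2 := by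
    intro x hx
    have hpx := hp x hx
    have hsquare : 0 ≤ p x * (f' x - w x / p x * f x) ^ 2 := by positivity
    calc w' x * f x ^ 2 + w x * (2 * f x * f' x)
        ≤ -(w x ^ 2 / p x + q x) * f x ^ 2 + w x * (2 * f x * f' x) := by
          gcongr; exact hriccati x hx
      _ = p x * f' x ^ 2 - q x * f x ^ 2 - p x * (f' x - w x / p x * f x) ^ 2 := by
          field_simp; ring
      _ ≤ p x * f' x ^ 2 - q x * f x ^ 2 := sub_le_self _ hsquare
  have hboundary := sub_le_integral_of_hasDeriv_right_of_le hab (hw.mul (hf.pow 2))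
    (fun x hx => (hderiv x hx).hasDerivWithinAt)
    ((intervalIntegrable_iff_integrableOn_Icc_of_le hab).1 (hpf'.sub hqf)) hderiv_le
  rw [integral_sub hpf' hqf] at hboundary
  simpa [hfa, hfb] using hboundary

theorem hasDerivAt_neg_mul_tan_riccati {k m x : ℝ} (hcos : cos (k * (x - m)) ≠ 0) :
    HasDerivAt (fun x => -k * tan (k * (x - m))) (-(k ^ 2 + (-k * tan (k * (x - m))) ^ 2)) x := by
  have hlinear : HasDerivAt (fun x => k * (x - m)) k x := by
    simpa using ((hasDerivAt_id x).sub_const m).const_mul k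
  refine (((hasDerivAt_tan hcos).comp x hlinear).const_mul (-k)).congr_deriv ?_
  rw [one_div, ← inv_one_add_tan_sq hcos, inv_inv]
  ring

/-- The substitution `u ↦ u / √r` on the level of logarithmic derivatives: if `v = u' / u`, then
`r v - 1 / 2 = r (u / √r)' / (u / √r)`. -/
theorem hasDerivAt_id_mul_sub_half_riccati {v : ℝ → ℝ} {κ r : ℝ} (hr : r ≠ 0)
    (hv : HasDerivAt v (-(κ + v r ^ 2)) r) :
    HasDerivAt (fun r => r * v r - 1 / 2)
      (-((r * v r - 1 / 2) ^ 2 / r + (κ * r - 1 / (4 * r)))) r := by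
  refine (((hasDerivAt_id' r).fun_mul hv).sub_const (1 / 2)).congr_deriv ?_
  field_simp
  ring

theorem cos_mul_sub_midpoint_pos {a b k x : ℝ} (hk : 0 ≤ k) (hkπ : k * (b - a) < π)
    (hx : x ∈ Set.Icc a b) : 0 < cos (k * (x - (a + b) / 2)) := by
  have hleft := mul_nonneg hk (sub_nonneg.2 hx.1)
  have hright := mul_nonneg hk (sub_nonneg.2 hx.2)
  exact cos_pos_of_mem_Ioo ⟨by linarith, by linarith⟩

theorem continuousOn_sq_div_id {f : ℝ → ℝ} {s : Set ℝ} (hf : ContinuousOn f s)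
    (hzero : 0 ∈ s → f 0 = 0 ∧ DifferentiableAt ℝ f 0) :
    ContinuousOn (fun x => f x ^ 2 / x) s := by
  intro x hx
  rcases eq_or_ne x 0 with rfl | hx0
  · obtain ⟨hf0, hdiff⟩ := hzero hx
    -- At `0` both sides vanish, the left one because `y / 0 = 0`.
    have hfactor : (fun x => f x ^ 2 / x) = fun x => dslope f 0 x * f x := by
      funext x
      rcases eq_or_ne x 0 with rfl | hx0
      · simp [hf0]
      · rw [dslope_of_ne f hx0, slope_def_field, hf0]
        ring
    rw [hfactor]
    exact ((continuousAt_dslope_same.2 hdiff).mul hdiff.continuousAt).continuousWithinAt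
  · exact ((hf x hx).pow 2).div continuousWithinAt_id hx0

theorem intervalIntegrable_id_mul_sq {a b : ℝ} {f : ℝ → ℝ} (hab : a ≤ b)
    (hf : ContinuousOn f (Set.Icc a b)) :
    IntervalIntegrable (fun x => x * f x ^ 2) volume a b :=
  (continuousOn_id.mul (hf.pow 2)).intervalIntegrable_of_Icc hab

section Radial

variable {α β : ℝ} {ψ ψ' : ℝ → ℝ}

theorem intervalIntegrable_radial_potential_mul_sq (κ : ℝ)
    (hrψ : IntervalIntegrable (fun r => r * ψ r ^ 2) volume α β)
    (hψr : IntervalIntegrable (fun r => ψ r ^ 2 / r) volume α β) :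
    IntervalIntegrable (fun r => (κ * r - 1 / (4 * r)) * ψ r ^ 2) volume α β := by
  refine ((hrψ.const_mul κ).sub (hψr.const_mul (1 / 4))).congr fun r _ => ?_
  ring

theorem integral_radial_potential_mul_sq (κ : ℝ)
    (hrψ : IntervalIntegrable (fun r => r * ψ r ^ 2) volume α β)
    (hψr : IntervalIntegrable (fun r => ψ r ^ 2 / r) volume α β) :
    ∫ r in α..β, (κ * r - 1 / (4 * r)) * ψ r ^ 2 =
      κ * (∫ r in α..β, r * ψ r ^ 2) - 1 / 4 * ∫ r in α..β, ψ r ^ 2 / r := by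
  rw [← intervalIntegral.integral_const_mul, ← intervalIntegral.integral_const_mul,
    ← integral_sub (hrψ.const_mul κ) (hψr.const_mul (1 / 4))]
  exact integral_congr fun r _ => by ring

theorem integral_radial_le_of_mul_lt_pi {k : ℝ} (hk : 0 ≤ k) (hkπ : k * (β - α) < π)
    (hα : 0 ≤ α) (hαβ : α ≤ β)
    (hψ : ContinuousOn ψ (Set.Icc α β)) (hψ' : ∀ r ∈ Set.Ioo α β, HasDerivAt ψ (ψ' r) r)
    (hψα : ψ α = 0) (hψβ : ψ β = 0)
    (hrψ' : IntervalIntegrable (fun r => r * ψ' r ^ 2) volume α β)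
    (hψr : IntervalIntegrable (fun r => ψ r ^ 2 / r) volume α β) :
    ∫ r in α..β, (k ^ 2 * r - 1 / (4 * r)) * ψ r ^ 2 ≤ ∫ r in α..β, r * ψ' r ^ 2 := by
  have hpos : ∀ r ∈ Set.Ioo α β, 0 < r := fun r hr => hα.trans_lt hr.1
  have htan : ∀ r ∈ Set.Icc α β, HasDerivAt (fun r => -k * tan (k * (r - (α + β) / 2)))
      (-(k ^ 2 + (-k * tan (k * (r - (α + β) / 2))) ^ 2)) r :=
    fun r hr => hasDerivAt_neg_mul_tan_riccati (cos_mul_sub_midpoint_pos hk hkπ hr).ne'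
  have hw : ContinuousOn (fun r => r * (-k * tan (k * (r - (α + β) / 2))) - 1 / 2)
      (Set.Icc α β) :=
    (continuousOn_id.mul fun r hr => (htan r hr).continuousAt.continuousWithinAt).sub
      continuousOn_const
  exact integral_mul_sq_le_integral_mul_deriv_sq_of_riccati hαβ hpos hw
    (fun r hr => hasDerivAt_id_mul_sub_half_riccati (hpos r hr).ne'
      (htan r (Set.Ioo_subset_Icc_self hr)))
    (fun _ _ => le_rfl) hψ hψ' hψα hψβ hrψ'
    (intervalIntegrable_radial_potential_mul_sq _ (intervalIntegrable_id_mul_sq hαβ hψ) hψr)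

theorem weighted_radial_inequality_general (hα : 0 ≤ α) (hαβ : α < β)
    (hψ : ContinuousOn ψ (Set.Icc α β)) (hψ' : ∀ r ∈ Set.Ioo α β, HasDerivAt ψ (ψ' r) r)
    (hψα : ψ α = 0) (hψβ : ψ β = 0)
    (hrψ' : IntervalIntegrable (fun r => r * ψ' r ^ 2) volume α β)
    (hψr : IntervalIntegrable (fun r => ψ r ^ 2 / r) volume α β) :
    IntervalIntegrable
      (fun r : ℝ => ((π / (β - α)) ^ 2 * r - 1 / (4 * r)) * (ψ r) ^ 2) volume α β ∧
    (∫ r in α..β, r * (ψ' r) ^ 2) ≥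
      ∫ r in α..β, ((π / (β - α)) ^ 2 * r - 1 / (4 * r)) * (ψ r) ^ 2 := by
  have hrψ := intervalIntegrable_id_mul_sq hαβ.le hψ
  refine ⟨intervalIntegrable_radial_potential_mul_sq _ hrψ hψr, ?_⟩
  have hlength : 0 < β - α := sub_pos.2 hαβ
  have hcontinuous :
      Continuous fun k : ℝ => ∫ r in α..β, (k ^ 2 * r - 1 / (4 * r)) * ψ r ^ 2 := by
    simp only [integral_radial_potential_mul_sq _ hrψ hψr]
    fun_prop
  refine le_of_tendsto (hcontinuous.continuousWithinAt (s := Set.Iio (π / (β - α)))) ?_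
  filter_upwards [Ioo_mem_nhdsLT (div_pos pi_pos hlength)] with k hk
  exact integral_radial_le_of_mul_lt_pi hk.1.le ((lt_div_iff₀ hlength).1 hk.2) hα hαβ.le
    hψ hψ' hψα hψβ hrψ' hψr

end Radial

/-- Weighted radial inequality: for `0 ≤ α < β` and `ψ` continuously differentiable on
`[α,β]` with `ψ(α) = ψ(β) = 0`, the right-hand integrand is integrable and
`∫_α^β r ψ'(r)² dr ≥ ∫_α^β ((π/(β−α))² r − 1/(4r)) ψ(r)² dr`. -/
theorem weighted_radial_inequality (α β : ℝ) (hα : 0 ≤ α) (hαβ : α < β)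
    (ψ ψ' : ℝ → ℝ)
    (hderiv : ∀ x ∈ Set.Icc α β, HasDerivAt ψ (ψ' x) x)
    (hψ'cont : ContinuousOn ψ' (Set.Icc α β))
    (hψα : ψ α = 0) (hψβ : ψ β = 0) :
    IntervalIntegrable
      (fun r : ℝ => ((π / (β - α)) ^ 2 * r - 1 / (4 * r)) * (ψ r) ^ 2) volume α β ∧
    (∫ r in α..β, r * (ψ' r) ^ 2) ≥
      ∫ r in α..β, ((π / (β - α)) ^ 2 * r - 1 / (4 * r)) * (ψ r) ^ 2 := by
  have hψ : ContinuousOn ψ (Set.Icc α β) := HasDerivAt.continuousOn hderiv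
  have hψr : ContinuousOn (fun r => ψ r ^ 2 / r) (Set.Icc α β) :=
    continuousOn_sq_div_id hψ fun h0 =>
      ⟨le_antisymm h0.1 hα ▸ hψα, (hderiv 0 h0).differentiableAt⟩
  exact weighted_radial_inequality_general hα hαβ hψ
    (fun r hr => hderiv r (Set.Ioo_subset_Icc_self hr)) hψα hψβ
    (intervalIntegrable_id_mul_sq hαβ.le hψ'cont) (hψr.intervalIntegrable_of_Icc hαβ.le)
end

section
/- Let r : [0,∞) → [0,∞) be continuous and strictly increasing, and assume the width function θ ↦ r(θ+2π) − r(θ) is nondecreasing and tends to +∞ as θ → ∞. Let Γ = { (r(θ)·cos θ, r(θ)·sin θ) : θ ≥ 0 } ⊂ ℝ². Then for every R > 0 there exists a point x ∈ ℝ² \ Γ such that the open ball of radius R centered at x is disjoint from Γ; consequently there is a pairwise disjoint family of discs D_n ⊂ ℝ² \ Γ with diameter of D_n equal to n for every n ∈ ℕ. -/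
open Real Filter Metric

/-!
Choose a half-turn `[T, T + π]` along which the radius grows by more than `2 * R`, and let `x` be
the point at angle `T - π / 2` whose radius is the mean of the radii at the two ends. The part of
the spiral before `T` is too close to the origin to come within `R` of `x`, the part after `T + π`
is too far out, and the half-turn itself lies in the half-plane opposite to `x`. Such half-turns
exist because a wide full turn contains a wide half-turn. Finally, a large disc avoiding the
spiral contains a smaller, still large, disc that also avoids a prescribed bounded set, so
disjoint discs can be chosen one after another.
-/

/-- A set `S` has large holes when its complement contains closed balls of every radius. -/
def HasLargeHoles {X : Type*} [PseudoMetricSpace X] (S : Set X) : Prop :=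
  ∀ R : ℝ, ∃ x : X, Disjoint (closedBall x R) S

lemma exists_norm_eq_and_norm_le_norm_add {E : Type*} [SeminormedAddCommGroup E]
    [NormedSpace ℝ E] (x v : E) : ∃ w : E, ‖w‖ = ‖v‖ ∧ ‖v‖ ≤ ‖x + w‖ := by
  have hsum : 2 * ‖v‖ ≤ ‖x + v‖ + ‖x - v‖ :=
    calc 2 * ‖v‖ = ‖(2 : ℝ) • v‖ := by simp [norm_smul]
      _ = ‖(x + v) - (x - v)‖ := by congr 1; module
      _ ≤ ‖x + v‖ + ‖x - v‖ := norm_sub_le _ _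
  rcases le_total ‖v‖ ‖x + v‖ with hv | hv
  · exact ⟨v, rfl, hv⟩
  · exact ⟨-v, norm_neg v, by rw [← sub_eq_add_neg]; linarith⟩

namespace HasLargeHoles

lemma exists_notMem_and_ball_inter_eq_empty {X : Type*} [PseudoMetricSpace X] {S : Set X}
    (hS : HasLargeHoles S) {R : ℝ} (hR : 0 ≤ R) : ∃ x, x ∉ S ∧ ball x R ∩ S = ∅ := by
  obtain ⟨x, hx⟩ := hS R
  exact ⟨x, hx.notMem_of_mem_left (mem_closedBall_self hR),
    (hx.mono_left ball_subset_closedBall).inter_eq⟩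

variable {E : Type*} [NormedAddCommGroup E] [NormedSpace ℝ E] [Nontrivial E] {S : Set E}

lemma union_isBounded (hS : HasLargeHoles S) {B : Set E} (hB : Bornology.IsBounded B) :
    HasLargeHoles (S ∪ B) := by
  intro R
  obtain ⟨C, hBC⟩ := hB.subset_closedBall 0
  obtain ⟨v, hv⟩ := NormedSpace.exists_lt_norm ℝ E (R + C)
  obtain ⟨x, hx⟩ := hS (R + ‖v‖)
  obtain ⟨w, hw, hxw⟩ := exists_norm_eq_and_norm_le_norm_add x v
  refine ⟨x + w, Set.disjoint_union_right.2 ⟨?_, ?_⟩⟩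
  · exact hx.mono_left (closedBall_subset_closedBall' (by simp [hw]))
  · refine (closedBall_disjoint_closedBall ?_).mono_right hBC
    rw [dist_zero_right]
    exact hv.trans_le hxw

lemma exists_seq_pairwise_disjoint_closedBall (hS : HasLargeHoles S) (ρ : ℕ → ℝ) :
    ∃ x : ℕ → E, (Pairwise fun m n => Disjoint (closedBall (x m) (ρ m)) (closedBall (x n) (ρ n))) ∧
      ∀ n, Disjoint (closedBall (x n) (ρ n)) S := by
  -- Choosing discs `(k, x)` of strictly increasing radius `k`, a subsequence has radii above `ρ`.
  obtain ⟨disc, hmiss, hdisc⟩ := exists_seq_of_forall_finset_exists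
    (fun p : ℕ × E => Disjoint (closedBall p.2 p.1) S)
    (fun p q => p.1 < q.1 ∧ Disjoint (closedBall p.2 p.1) (closedBall q.2 q.1)) fun s _ => by
      have hbdd : Bornology.IsBounded (⋃ p ∈ s, closedBall p.2 (p.1 : ℝ)) :=
        (Bornology.isBounded_biUnion_finset s).2 fun _ _ => isBounded_closedBall
      obtain ⟨x, hx⟩ := hS.union_isBounded hbdd ((s.sup Prod.fst + 1 : ℕ) : ℝ)
      rw [Set.disjoint_union_right, Set.disjoint_iUnion₂_right] at hx
      exact ⟨(s.sup Prod.fst + 1, x), hx.1, fun p hp =>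
        ⟨Nat.lt_succ_of_le (Finset.le_sup (f := Prod.fst) hp), (hx.2 p hp).symm⟩⟩
  have hindex : StrictMono fun n => (disc n).1 := fun m n hmn => (hdisc m n hmn).1
  obtain ⟨φ, hφ, hρφ⟩ := extraction_forall_of_eventually fun n =>
    tendsto_natCast_atTop_atTop.eventually_ge_atTop (ρ n)
  have hsub : ∀ n, closedBall (disc (φ n)).2 (ρ n) ⊆ closedBall (disc (φ n)).2 (disc (φ n)).1 :=
    fun n => closedBall_subset_closedBall ((hρφ n).trans (mod_cast hindex.le_apply))
  refine ⟨fun n => (disc (φ n)).2, ?_, fun n => (hmiss _).mono_left (hsub n)⟩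
  exact (pairwise_disjoint_on _).2 fun m n hmn => (hdisc _ _ (hφ hmn)).2.mono (hsub m) (hsub n)

end HasLargeHoles

lemma norm_le_dist_of_inner_nonpos {E : Type*} [SeminormedAddCommGroup E] [InnerProductSpace ℝ E]
    {p x : E} (h : inner ℝ p x ≤ 0) : ‖x‖ ≤ dist p x := by
  rw [dist_eq_norm]
  refine le_of_sq_le_sq ?_ (norm_nonneg _)
  rw [norm_sub_sq_real]
  linarith [sq_nonneg ‖p‖]

/-- The point of the Euclidean plane with polar coordinates `(ρ, θ)`; a negative `ρ` gives the point
at distance `-ρ` in the direction opposite to `θ`. -/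
noncomputable def polarPoint (ρ θ : ℝ) : EuclideanSpace ℝ (Fin 2) :=
  !₂[ρ * cos θ, ρ * sin θ]

lemma inner_polarPoint (ρ σ θ φ : ℝ) :
    inner ℝ (polarPoint ρ θ) (polarPoint σ φ) = ρ * σ * cos (θ - φ) := by
  simp only [polarPoint, PiLp.inner_apply, RCLike.inner_apply, ringHom_apply, Fin.sum_univ_two,
    Matrix.cons_val_zero, Matrix.cons_val_one, Matrix.cons_val_fin_one, cos_sub]
  ring

lemma norm_polarPoint (ρ θ : ℝ) : ‖polarPoint ρ θ‖ = |ρ| := by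
  rw [norm_eq_sqrt_real_inner, inner_polarPoint, sub_self, cos_zero, mul_one, sqrt_mul_self_eq_abs]

/-- The spiral with polar equation `ρ = r θ`, `θ ≥ 0`. -/
def spiral (r : ℝ → ℝ) : Set (EuclideanSpace ℝ (Fin 2)) :=
  {p | ∃ θ : ℝ, 0 ≤ θ ∧ p = polarPoint (r θ) θ}

section Growth

variable {r : ℝ → ℝ} {a : ℝ}

lemma frequently_lt_sub_of_frequently_lt_sub_two_mul (ha : 0 ≤ a)
    (hwidth : ∀ C, ∃ᶠ θ in atTop, C < r (θ + 2 * a) - r θ) (C : ℝ) :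
    ∃ᶠ θ in atTop, C < r (θ + a) - r θ := by
  refine frequently_atTop.2 fun N => ?_
  obtain ⟨θ, hNθ, hθ⟩ := frequently_atTop.1 (hwidth (2 * C)) N
  rw [two_mul a, ← add_assoc] at hθ
  rcases lt_or_ge C (r (θ + a) - r θ) with h | h
  · exact ⟨θ, hNθ, h⟩
  · exact ⟨θ + a, by linarith, by linarith⟩

lemma tendsto_atTop_of_frequently_lt_sub (hr : MonotoneOn r (Set.Ici 0)) (ha : 0 ≤ a)
    (hwidth : ∀ C, ∃ᶠ θ in atTop, C < r (θ + a) - r θ) : Tendsto r atTop atTop := by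
  refine tendsto_atTop.2 fun b => ?_
  obtain ⟨θ, hθ, hbθ⟩ := frequently_atTop.1 (hwidth (b - r 0)) 0
  filter_upwards [eventually_ge_atTop (θ + a)] with t ht
  have hθa : 0 ≤ θ + a := add_nonneg hθ ha
  have h_start : r 0 ≤ r θ := hr Set.self_mem_Ici hθ hθ
  have h_end : r (θ + a) ≤ r t := hr hθa (hθa.trans ht) ht
  linarith

end Growth

section Spiral

variable {r : ℝ → ℝ}

lemma disjoint_closedBall_spiral {T R : ℝ} (hr : MonotoneOn r (Set.Ici 0)) (hT : 0 ≤ T)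
    (hrT : |r 0| ≤ r T) (hR : 2 * R < r (T + π) - r T) :
    Disjoint (closedBall (polarPoint ((r T + r (T + π)) / 2) (T - π / 2)) R) (spiral r) := by
  set x := polarPoint ((r T + r (T + π)) / 2) (T - π / 2) with hx
  have hTπ : 0 ≤ T + π := add_nonneg hT pi_pos.le
  have hrT_nonneg : 0 ≤ r T := (abs_nonneg _).trans hrT
  have hrTπ : r T ≤ r (T + π) := hr hT hTπ (by linarith [pi_pos])
  have hx_norm : ‖x‖ = (r T + r (T + π)) / 2 := by
    rw [norm_polarPoint, abs_of_nonneg (by linarith)]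
  rw [Set.disjoint_right]
  rintro _ ⟨θ, hθ, rfl⟩
  rw [mem_closedBall, not_le]
  rcases le_total θ T with hθT | hTθ
  · have h_inner : ‖polarPoint (r θ) θ‖ ≤ r T := by
      rw [norm_polarPoint]
      exact abs_le.2 ⟨(neg_le_of_abs_le hrT).trans (hr Set.self_mem_Ici hθ hθ), hr hθ hT hθT⟩
    rw [dist_comm, dist_eq_norm]
    linarith [norm_sub_norm_le x (polarPoint (r θ) θ)]
  rcases le_total θ (T + π) with hθTπ | hTπθ
  · have h_opposite : inner ℝ (polarPoint (r θ) θ) x ≤ 0 := by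
      rw [hx, inner_polarPoint]
      refine mul_nonpos_of_nonneg_of_nonpos ?_ ?_
      · exact mul_nonneg (hrT_nonneg.trans (hr hT hθ hTθ)) (by linarith)
      · exact cos_nonpos_of_pi_div_two_le_of_le (by linarith) (by linarith)
    linarith [norm_le_dist_of_inner_nonpos h_opposite]
  · have h_outer : r (T + π) ≤ ‖polarPoint (r θ) θ‖ := by
      rw [norm_polarPoint]
      exact (hr hTπ hθ hTπθ).trans (le_abs_self _)
    rw [dist_eq_norm]
    linarith [norm_sub_norm_le (polarPoint (r θ) θ) x]

lemma hasLargeHoles_spiral (hr : MonotoneOn r (Set.Ici 0))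
    (hwidth : ∀ C, ∃ᶠ θ in atTop, C < r (θ + 2 * π) - r θ) : HasLargeHoles (spiral r) := by
  intro R
  have hr_top : Tendsto r atTop atTop :=
    tendsto_atTop_of_frequently_lt_sub hr two_pi_pos.le hwidth
  have h_half : ∃ᶠ T in atTop, 2 * R < r (T + π) - r T :=
    frequently_lt_sub_of_frequently_lt_sub_two_mul pi_pos.le hwidth (2 * R)
  obtain ⟨T, hR, hT, hrT⟩ := (h_half.and_eventually
    ((eventually_ge_atTop 0).and (hr_top.eventually_ge_atTop |r 0|))).exists
  exact ⟨_, disjoint_closedBall_spiral hr hT hrT hR⟩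

theorem expanding_spiral_large_discs_general (hr : MonotoneOn r (Set.Ici 0))
    (hwidth : ∀ C, ∃ᶠ θ in atTop, C < r (θ + 2 * π) - r θ) :
    (∀ R : ℝ, 0 < R → ∃ x, x ∉ spiral r ∧ ball x R ∩ spiral r = ∅) ∧
    ∃ x : ℕ → EuclideanSpace ℝ (Fin 2),
      (Pairwise fun m n : ℕ =>
        Disjoint (closedBall (x m) ((m : ℝ) / 2)) (closedBall (x n) ((n : ℝ) / 2))) ∧
      (∀ n : ℕ, closedBall (x n) ((n : ℝ) / 2) ∩ spiral r = ∅) ∧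
      (∀ n : ℕ, diam (closedBall (x n) ((n : ℝ) / 2)) = n) := by
  have holes : HasLargeHoles (spiral r) := hasLargeHoles_spiral hr hwidth
  obtain ⟨x, hdisj, hmiss⟩ := holes.exists_seq_pairwise_disjoint_closedBall fun n => (n : ℝ) / 2
  refine ⟨fun R hR => holes.exists_notMem_and_ball_inter_eq_empty hR.le,
    x, hdisj, fun n => (hmiss n).inter_eq, fun n => ?_⟩
  rw [diam_closedBall_eq _ (by positivity), mul_div_cancel₀ _ two_ne_zero]

end Spiral

/-- If `r : [0,∞) → [0,∞)` is continuous and strictly increasing with a nondecreasing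
width function `θ ↦ r(θ+2π) − r(θ)` tending to `+∞`, and
`Γ = {(r(θ)cos θ, r(θ)sin θ) : θ ≥ 0}`, then for every `R > 0` there is a point whose
open ball of radius `R` misses `Γ`; consequently there is a pairwise disjoint family
of discs in the complement of `Γ` with the `n`-th disc of diameter `n`. -/
theorem expanding_spiral_large_discs (r : ℝ → ℝ)
    (hcont : ContinuousOn r (Set.Ici 0))
    (hmono : StrictMonoOn r (Set.Ici 0))
    (hnonneg : ∀ θ : ℝ, 0 ≤ θ → 0 ≤ r θ)
    (hwidth_mono : MonotoneOn (fun θ : ℝ => r (θ + 2 * π) - r θ) (Set.Ici 0))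
    (hwidth_div : Tendsto (fun θ : ℝ => r (θ + 2 * π) - r θ) atTop atTop)
    (Γ : Set (EuclideanSpace ℝ (Fin 2)))
    (hΓ : Γ = {p : EuclideanSpace ℝ (Fin 2) | ∃ θ : ℝ, 0 ≤ θ ∧
      p = (WithLp.equiv 2 (Fin 2 → ℝ)).symm ![r θ * Real.cos θ, r θ * Real.sin θ]}) :
    (∀ R : ℝ, 0 < R → ∃ x : EuclideanSpace ℝ (Fin 2), x ∉ Γ ∧
      Metric.ball x R ∩ Γ = ∅) ∧
    ∃ x : ℕ → EuclideanSpace ℝ (Fin 2),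
      (Pairwise fun m n : ℕ =>
        Disjoint (Metric.closedBall (x m) ((m : ℝ) / 2))
          (Metric.closedBall (x n) ((n : ℝ) / 2))) ∧
      (∀ n : ℕ, Metric.closedBall (x n) ((n : ℝ) / 2) ∩ Γ = ∅) ∧
      (∀ n : ℕ, Metric.diam (Metric.closedBall (x n) ((n : ℝ) / 2)) = n) := by
  subst hΓ
  exact expanding_spiral_large_discs_general hmono.monotoneOn
    fun C => (hwidth_div.eventually_gt_atTop C).frequently
end

section
/- Let a > 0 and define κ(θ) = (2+θ²)/(a(1+θ²)^{3/2}), κ₁(θ) = κ'(θ)/(a√(1+θ²)), κ₂(θ) = κ₁'(θ)/(a√(1+θ²)), and for u ≥ 0 set V(θ,u) = −κ(θ)²/(4(1−uκ(θ))²) − u·κ₂(θ)/(2(1−uκ(θ))³) − (5/4)·u²·κ₁(θ)²/(1−uκ(θ))⁴. Then for every U > 0 one has, uniformly for u ∈ [0,U], V(θ,u) = −1/(4a²θ²) + O(θ^{-3}) as θ → ∞; i.e. sup_{u∈[0,U]} |V(θ,u) + 1/(4a²θ²)| = O(θ^{-3}). -/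
open Real Filter Asymptotics

/-!
For bounded `u` and `k → 0` the factors `1 - u * k` tend to `1`, so the potential equals
`-k ^ 2 / 4` up to terms of size `k ^ 3`, `k₂` and `k₁ ^ 2`; uniformity in `u ∈ S` is convergence
along the product filter `atTop ×ˢ 𝓟 S`. For the spiral, `k ^ 2 = 1 / (a ^ 2 * θ ^ 2) + O(θ⁻⁴)`,
and each arc-length derivative gains two powers of `θ⁻¹`: one from differentiating, one from
dividing by the speed, which is of order `θ`. Hence `k₁ = O(θ⁻³)`, `k₂ = O(θ⁻⁵)`, and the
dominant error is `k ^ 3 = O(θ⁻³)`.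
-/

open scoped Topology

section Preliminaries

theorem isBigO_biSup_norm {α β E F : Type*} [SeminormedAddCommGroup E] [SeminormedAddCommGroup F]
    {l : Filter α} {S : Set β} {f : α → β → E} {g : α → F}
    (h : (fun p : α × β ↦ f p.1 p.2) =O[l ×ˢ 𝓟 S] fun p ↦ g p.1) :
    (fun x ↦ ⨆ y ∈ S, ‖f x y‖) =O[l] g := by
  obtain ⟨C, hC, hfg⟩ := h.exists_nonneg
  refine IsBigO.of_bound C ?_
  filter_upwards [eventually_prod_principal_iff.mp hfg.bound] with x hx
  have bound_nonneg : 0 ≤ C * ‖g x‖ := by positivity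
  rw [Real.norm_of_nonneg
    (Real.iSup_nonneg fun y ↦ Real.iSup_nonneg fun _ ↦ norm_nonneg (f x y))]
  exact Real.iSup_le (fun y ↦ Real.iSup_le (hx y) bound_nonneg) bound_nonneg

theorem isBigO_snd_one_of_isBounded {α E : Type*} [SeminormedAddCommGroup E] (l : Filter α)
    {S : Set E} (hS : Bornology.IsBounded S) :
    (fun p : α × E ↦ p.2) =O[l ×ˢ 𝓟 S] fun _ ↦ (1 : ℝ) := by
  obtain ⟨C, hC⟩ := hS.exists_norm_le
  refine IsBigO.of_bound C (eventually_prod_principal_iff.mpr (.of_forall fun x y hy ↦ ?_))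
  simpa using hC y hy

theorem isBigO_one_div_pow_atTop {m n : ℕ} (hmn : m ≤ n) :
    (fun x : ℝ ↦ 1 / x ^ n) =O[atTop] fun x ↦ 1 / x ^ m := by
  refine IsBigO.of_bound 1 ?_
  filter_upwards [eventually_ge_atTop 1] with x hx
  rw [one_mul, norm_of_nonneg (by positivity), norm_of_nonneg (by positivity)]
  gcongr

theorem isTheta_const_add_sq_atTop (c : ℝ) :
    (fun x : ℝ ↦ c + x ^ 2) =Θ[atTop] fun x ↦ x ^ 2 :=
  (isLittleO_const_left.mpr <| .inr <|
    tendsto_norm_atTop_atTop.comp (tendsto_pow_atTop two_ne_zero)).add_isTheta isTheta_rfl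

theorem isTheta_sqrt_const_add_sq_atTop (c : ℝ) :
    (fun x : ℝ ↦ √(c + x ^ 2)) =Θ[atTop] fun x ↦ x := by
  have hsq := isTheta_const_add_sq_atTop c
  have hnonneg : ∀ᶠ x : ℝ in atTop, 0 ≤ c + x ^ 2 :=
    (tendsto_atTop_add_const_left _ c (tendsto_pow_atTop two_ne_zero)).eventually_ge_atTop 0
  have hsqrt : (fun x : ℝ ↦ √(x ^ 2)) =ᶠ[atTop] fun x ↦ x :=
    (eventually_ge_atTop 0).mono fun x hx ↦ sqrt_sq hx
  exact IsTheta.trans_eventuallyEq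
    ⟨hsq.1.sqrt (.of_forall sq_nonneg), hsq.2.sqrt hnonneg⟩ hsqrt

theorem isBigO_biquadratic_atTop (b c d : ℝ) :
    (fun x : ℝ ↦ b * x ^ 4 + c * x ^ 2 + d) =O[atTop] fun x ↦ x ^ 4 := by
  have hsq : (fun x : ℝ ↦ x ^ 2) =O[atTop] fun x ↦ x ^ 4 :=
    (isLittleO_pow_pow_atTop_of_lt (by norm_num)).isBigO
  have hconst : (fun _ : ℝ ↦ d) =O[atTop] fun x ↦ x ^ 4 :=
    (isLittleO_const_left.mpr <| .inr <|
      tendsto_norm_atTop_atTop.comp (tendsto_pow_atTop four_ne_zero)).isBigO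
  exact (((isBigO_refl _ _).const_mul_left b).add (hsq.const_mul_left c)).add hconst

theorem hasDerivAt_const_add_sq (c x : ℝ) : HasDerivAt (fun y ↦ c + y ^ 2) (2 * x) x := by
  simpa using (hasDerivAt_pow 2 x).const_add c

end Preliminaries

section EffectivePotential

/-- The curvature-induced potential at signed distance `u` from a planar curve, at a point where the
curvature and its first two arc-length derivatives are `k`, `k₁` and `k₂`. Division makes it
meaningless on the focal set `u * k = 1`. -/
noncomputable def effectivePotential (k k₁ k₂ u : ℝ) : ℝ :=
  -k ^ 2 / (4 * (1 - u * k) ^ 2) - u * k₂ / (2 * (1 - u * k) ^ 3)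
    - 5 / 4 * (u ^ 2 * k₁ ^ 2 / (1 - u * k) ^ 4)

theorem effectivePotential_add_sq_div_four {k k₁ k₂ u : ℝ} (h : 1 - u * k ≠ 0) :
    effectivePotential k k₁ k₂ u + k ^ 2 / 4 =
      k ^ 3 * (-(u * (2 - u * k)) / 4 * (1 - u * k)⁻¹ ^ 2)
        + k₂ * (-u / 2 * (1 - u * k)⁻¹ ^ 3)
        + k₁ ^ 2 * (-(5 / 4) * u ^ 2 * (1 - u * k)⁻¹ ^ 4) := by
  rw [effectivePotential]
  generalize hD : 1 - u * k = D at h ⊢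
  field_simp
  linear_combination -2 * D ^ 2 * k ^ 2 * (1 - u * k + D) * hD

theorem isBigO_effectivePotential_add_sq_div_four {α : Type*} {l : Filter α}
    {k k₁ k₂ u g : α → ℝ} (hu : u =O[l] fun _ ↦ (1 : ℝ)) (hk : Tendsto k l (𝓝 0))
    (hk_cube : (fun x ↦ k x ^ 3) =O[l] g) (hk₁_sq : (fun x ↦ k₁ x ^ 2) =O[l] g)
    (hk₂ : k₂ =O[l] g) :
    (fun x ↦ effectivePotential (k x) (k₁ x) (k₂ x) (u x) + k x ^ 2 / 4) =O[l] g := by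
  have huk : Tendsto (fun x ↦ u x * k x) l (𝓝 0) := by
    simpa [isLittleO_one_iff] using hu.mul_isLittleO ((isLittleO_one_iff ℝ).mpr hk)
  have hD : Tendsto (fun x ↦ 1 - u x * k x) l (𝓝 1) := by simpa using huk.const_sub 1
  have hDinv (n : ℕ) : (fun x ↦ (1 - u x * k x)⁻¹ ^ n) =O[l] fun _ ↦ (1 : ℝ) :=
    ((hD.inv₀ one_ne_zero).pow n).isBigO_one ℝ
  have hcoeff_cube : (fun x ↦ -(u x * (2 - u x * k x)) / 4 * (1 - u x * k x)⁻¹ ^ 2)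
      =O[l] fun _ ↦ (1 : ℝ) := by
    have htwo_sub := (huk.const_sub 2).isBigO_one ℝ
    simpa [div_eq_inv_mul, mul_assoc] using
      ((hu.mul htwo_sub).const_mul_left (-4⁻¹)).mul (hDinv 2)
  have hcoeff₂ : (fun x ↦ -u x / 2 * (1 - u x * k x)⁻¹ ^ 3) =O[l] fun _ ↦ (1 : ℝ) := by
    simpa [div_eq_inv_mul] using (hu.const_mul_left (-2⁻¹)).mul (hDinv 3)
  have hcoeff₁ : (fun x ↦ -(5 / 4) * u x ^ 2 * (1 - u x * k x)⁻¹ ^ 4) =O[l] fun _ ↦ (1 : ℝ) := by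
    simpa using ((hu.pow 2).const_mul_left (-(5 / 4))).mul (hDinv 4)
  have hexpansion := ((hk_cube.mul hcoeff_cube).add (hk₂.mul hcoeff₂)).add (hk₁_sq.mul hcoeff₁)
  simp only [mul_one] at hexpansion
  refine hexpansion.congr' ?_ .rfl
  filter_upwards [hD.eventually_ne one_ne_zero] with x hx
  exact (effectivePotential_add_sq_div_four hx).symm

end EffectivePotential

section ArchimedeanSpiral

/-- The derivative of `f` with respect to arc length along the Archimedean spiral of slope `a`,
parametrised by the polar angle. -/
noncomputable def spiralArcDeriv (a : ℝ) (f : ℝ → ℝ) (θ : ℝ) : ℝ :=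
  deriv f θ / (a * √(1 + θ ^ 2))

/-- The curvature of the Archimedean spiral of slope `a` at polar angle `θ`. -/
noncomputable def spiralCurvature (a θ : ℝ) : ℝ :=
  (2 + θ ^ 2) / (a * (1 + θ ^ 2) ^ ((3 : ℝ) / 2))

/-- The effective potential of a waveguide along the Archimedean spiral of slope `a`, in the
coordinates given by the polar angle `θ` and the signed distance `u` to the spiral. -/
noncomputable def spiralPotential (a θ u : ℝ) : ℝ :=
  effectivePotential (spiralCurvature a θ) (spiralArcDeriv a (spiralCurvature a) θ)
    (spiralArcDeriv a (spiralArcDeriv a (spiralCurvature a)) θ) u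

variable {a : ℝ}

theorem spiralCurvature_eq_div_sqrt_pow (a θ : ℝ) :
    spiralCurvature a θ = (2 + θ ^ 2) / (a * √(1 + θ ^ 2) ^ 3) := by
  rw [spiralCurvature, rpow_div_two_eq_sqrt 3 (by positivity)]
  norm_cast

theorem spiralCurvature_sq (a θ : ℝ) :
    spiralCurvature a θ ^ 2 = (2 + θ ^ 2) ^ 2 / (a ^ 2 * (1 + θ ^ 2) ^ 3) := by
  rw [spiralCurvature_eq_div_sqrt_pow, div_pow, mul_pow, pow_right_comm, sq_sqrt (by positivity)]

theorem hasDerivAt_spiralCurvature (ha : a ≠ 0) (θ : ℝ) :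
    HasDerivAt (spiralCurvature a) (-(θ * (4 + θ ^ 2)) / (a * √(1 + θ ^ 2) ^ 5)) θ := by
  have hw : 0 < 1 + θ ^ 2 := by positivity
  have hr : √(1 + θ ^ 2) ≠ 0 := (sqrt_pos.mpr hw).ne'
  have hquot := (hasDerivAt_const_add_sq 2 θ).fun_div
    ((((hasDerivAt_const_add_sq 1 θ).sqrt hw.ne').fun_pow 3).const_mul a)
    (mul_ne_zero ha (pow_ne_zero 3 hr))
  rw [funext (spiralCurvature_eq_div_sqrt_pow a)]
  refine hquot.congr_deriv ?_
  field_simp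
  push_cast
  linear_combination 2 * θ * √(1 + θ ^ 2) ^ 2 * sq_sqrt hw.le

theorem spiralArcDeriv_spiralCurvature (ha : a ≠ 0) (θ : ℝ) :
    spiralArcDeriv a (spiralCurvature a) θ =
      -(θ * (4 + θ ^ 2)) / (a ^ 2 * (1 + θ ^ 2) ^ 3) := by
  have hpow : (1 + θ ^ 2) ^ 3 = √(1 + θ ^ 2) ^ 5 * √(1 + θ ^ 2) := by
    rw [← pow_succ, pow_mul _ 2 3, sq_sqrt (by positivity)]
  rw [spiralArcDeriv, (hasDerivAt_spiralCurvature ha θ).deriv, hpow, div_div]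
  ring

theorem hasDerivAt_spiralArcDeriv_spiralCurvature (ha : a ≠ 0) (θ : ℝ) :
    HasDerivAt (spiralArcDeriv a (spiralCurvature a))
      ((3 * θ ^ 4 + 17 * θ ^ 2 - 4) / (a ^ 2 * (1 + θ ^ 2) ^ 4)) θ := by
  have hw : 1 + θ ^ 2 ≠ 0 := by positivity
  have hquot := (((hasDerivAt_id' θ).fun_mul (hasDerivAt_const_add_sq 4 θ)).fun_neg).fun_div
    (((hasDerivAt_const_add_sq 1 θ).fun_pow 3).const_mul (a ^ 2))
    (mul_ne_zero (pow_ne_zero 2 ha) (pow_ne_zero 3 hw))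
  rw [funext (spiralArcDeriv_spiralCurvature ha)]
  refine hquot.congr_deriv ?_
  field_simp
  ring

theorem isBigO_spiralCurvature (a : ℝ) : spiralCurvature a =O[atTop] fun θ ↦ 1 / θ := by
  have hquot := ((isTheta_const_add_sq_atTop 2).div
    ((isTheta_sqrt_const_add_sq_atTop 1).pow 3)).isBigO.const_mul_left a⁻¹
  refine hquot.congr' (.of_forall fun θ ↦ ?_) ?_
  · rw [spiralCurvature_eq_div_sqrt_pow]
    ring
  · filter_upwards [eventually_ne_atTop 0] with θ hθ
    field_simp

theorem isBigO_spiralCurvature_sq_sub (ha : a ≠ 0) :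
    (fun θ ↦ spiralCurvature a θ ^ 2 - 1 / (a ^ 2 * θ ^ 2)) =O[atTop] fun θ ↦ 1 / θ ^ 4 := by
  have hquot := ((isBigO_biquadratic_atTop 1 1 (-1)).mul
    ((isTheta_refl (fun θ : ℝ ↦ θ ^ 2) atTop).mul
      ((isTheta_const_add_sq_atTop 1).pow 3)).inv.isBigO).const_mul_left (a ^ 2)⁻¹
  refine hquot.congr' ?_ ?_
  · filter_upwards [eventually_ne_atTop 0] with θ hθ
    rw [spiralCurvature_sq]
    field_simp
    ring
  · filter_upwards [eventually_ne_atTop 0] with θ hθ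
    field_simp

theorem isBigO_spiralArcDeriv_spiralCurvature (ha : a ≠ 0) :
    spiralArcDeriv a (spiralCurvature a) =O[atTop] fun θ ↦ 1 / θ ^ 3 := by
  have hquot := (((isTheta_refl (fun θ : ℝ ↦ θ) atTop).mul (isTheta_const_add_sq_atTop 4)).div
    ((isTheta_const_add_sq_atTop 1).pow 3)).isBigO.const_mul_left (-(a ^ 2)⁻¹)
  refine hquot.congr' (.of_forall fun θ ↦ ?_) ?_
  · rw [spiralArcDeriv_spiralCurvature ha]
    field_simp
  · filter_upwards [eventually_ne_atTop 0] with θ hθ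
    field_simp

theorem isBigO_spiralArcDeriv_spiralArcDeriv_spiralCurvature (ha : a ≠ 0) :
    spiralArcDeriv a (spiralArcDeriv a (spiralCurvature a)) =O[atTop] fun θ ↦ 1 / θ ^ 5 := by
  have hquot := ((isBigO_biquadratic_atTop 3 17 (-4)).mul
    (((isTheta_const_add_sq_atTop 1).pow 4).mul
      (isTheta_sqrt_const_add_sq_atTop 1)).inv.isBigO).const_mul_left (a ^ 3)⁻¹
  refine hquot.congr' (.of_forall fun θ ↦ ?_) ?_
  · rw [spiralArcDeriv, (hasDerivAt_spiralArcDeriv_spiralCurvature ha θ).deriv]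
    field_simp
    ring
  · filter_upwards [eventually_ne_atTop 0] with θ hθ
    field_simp

theorem isBigO_spiralPotential_add_curvature_sq (ha : a ≠ 0) {S : Set ℝ}
    (hS : Bornology.IsBounded S) :
    (fun p : ℝ × ℝ ↦ spiralPotential a p.1 p.2 + spiralCurvature a p.1 ^ 2 / 4)
      =O[atTop ×ˢ 𝓟 S] fun p ↦ 1 / p.1 ^ 3 := by
  have hk := isBigO_spiralCurvature a
  have hk_tendsto : Tendsto (spiralCurvature a) atTop (𝓝 0) :=
    hk.trans_tendsto (by simpa using tendsto_inv_atTop_zero)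
  have hk_cube : (fun θ ↦ spiralCurvature a θ ^ 3) =O[atTop] fun θ ↦ 1 / θ ^ 3 := by
    simpa using hk.pow 3
  have hk₁_sq : (fun θ ↦ spiralArcDeriv a (spiralCurvature a) θ ^ 2)
      =O[atTop] fun θ ↦ 1 / θ ^ 3 := by
    refine IsBigO.trans ?_ (isBigO_one_div_pow_atTop (show 3 ≤ 6 by norm_num))
    simpa [← pow_mul] using (isBigO_spiralArcDeriv_spiralCurvature ha).pow 2
  have hk₂ := (isBigO_spiralArcDeriv_spiralArcDeriv_spiralCurvature ha).trans
    (isBigO_one_div_pow_atTop (show 3 ≤ 5 by norm_num))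
  exact isBigO_effectivePotential_add_sq_div_four (isBigO_snd_one_of_isBounded atTop hS)
    (hk_tendsto.comp tendsto_fst) (hk_cube.comp_fst _) (hk₁_sq.comp_fst _) (hk₂.comp_fst _)

theorem effective_potential_asymptotics_general (ha : a ≠ 0) {S : Set ℝ}
    (hS : Bornology.IsBounded S) :
    (fun θ ↦ ⨆ u ∈ S, |spiralPotential a θ u + 1 / (4 * a ^ 2 * θ ^ 2)|)
      =O[atTop] fun θ ↦ 1 / θ ^ 3 := by
  have hk_sq := ((isBigO_spiralCurvature_sq_sub ha).trans
    (isBigO_one_div_pow_atTop (show 3 ≤ 4 by norm_num))).const_mul_left 4⁻¹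
  have huniform : (fun p : ℝ × ℝ ↦ spiralPotential a p.1 p.2 + 1 / (4 * a ^ 2 * p.1 ^ 2))
      =O[atTop ×ˢ 𝓟 S] fun p ↦ 1 / p.1 ^ 3 := by
    refine ((isBigO_spiralPotential_add_curvature_sq ha hS).sub
      (hk_sq.comp_fst (𝓟 S))).congr_left fun p ↦ ?_
    simp only [Function.comp_apply]
    ring
  exact isBigO_biSup_norm (f := fun θ u ↦ spiralPotential a θ u + 1 / (4 * a ^ 2 * θ ^ 2))
    (g := fun θ ↦ 1 / θ ^ 3) huniform

end ArchimedeanSpiral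

/-- For the Archimedean spiral of slope `a > 0` with curvature
`κ(θ) = (2+θ²)/(a(1+θ²)^{3/2})`, arc-length derivatives `κ₁ = κ'/(a√(1+θ²))`,
`κ₂ = κ₁'/(a√(1+θ²))`, and effective potential
`V(θ,u) = −κ²/(4(1−uκ)²) − uκ₂/(2(1−uκ)³) − (5/4)u²κ₁²/(1−uκ)⁴`, for every `U > 0`
one has, uniformly for `u ∈ [0,U]`, `V(θ,u) = −1/(4a²θ²) + O(θ⁻³)` as `θ → ∞`:
`sup_{u∈[0,U]} |V(θ,u) + 1/(4a²θ²)| = O(θ⁻³)`. -/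
theorem effective_potential_asymptotics (a : ℝ) (ha : 0 < a)
    (κ κ₁ κ₂ : ℝ → ℝ) (V : ℝ → ℝ → ℝ)
    (hκ : ∀ θ : ℝ, κ θ = (2 + θ ^ 2) / (a * (1 + θ ^ 2) ^ ((3:ℝ)/2)))
    (hκ₁ : ∀ θ : ℝ, κ₁ θ = deriv κ θ / (a * Real.sqrt (1 + θ ^ 2)))
    (hκ₂ : ∀ θ : ℝ, κ₂ θ = deriv κ₁ θ / (a * Real.sqrt (1 + θ ^ 2)))
    (hV : ∀ θ u : ℝ, V θ u = -(κ θ) ^ 2 / (4 * (1 - u * κ θ) ^ 2)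
      - u * κ₂ θ / (2 * (1 - u * κ θ) ^ 3)
      - 5 / 4 * (u ^ 2 * (κ₁ θ) ^ 2 / (1 - u * κ θ) ^ 4)) :
    ∀ U : ℝ, 0 < U →
      (fun θ : ℝ => ⨆ u ∈ Set.Icc (0:ℝ) U, |V θ u + 1 / (4 * a ^ 2 * θ ^ 2)|)
        =O[atTop] fun θ : ℝ => 1 / θ ^ 3 := by
  intro U _
  obtain rfl : κ = spiralCurvature a := funext hκ
  obtain rfl : κ₁ = spiralArcDeriv a (spiralCurvature a) := funext hκ₁
  obtain rfl : κ₂ = spiralArcDeriv a (spiralArcDeriv a (spiralCurvature a)) := funext hκ₂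
  obtain rfl : V = spiralPotential a := funext₂ hV
  exact effective_potential_asymptotics_general ha.ne' (Metric.isBounded_Icc 0 U)
end
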